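/- Let U be a nonempty balanced open subset of a complex Banach space E. Then Û_P is a balanced open subset of E containing U, and every f ∈ H_b(U) has a unique holomorphic extension f̃ : Û_P → ℂ (f̃ is analytic on Û_P and f̃|_U = f). Moreover, for every n ∈ ℕ, f̃ is bounded on the hull (U_n)̂_P. -/

import Mathlib

/-!
The extension is the Taylor series of `f` at the origin, `g x = ∑ₖ pₖ(x, …, x)`.

Since `U` is balanced and open, a `U`-bounded set `A` can be multiplied by all scalars of a disc of
radius `ρ > 1` and remains `U`-bounded (`UBounded.exists_dilate`), so `f` is bounded by some `C` on
the dilated set. Cauchy's estimate for `t ↦ f (t • a)` then gives `‖pₖ(a, …, a)‖ ≤ C ρ⁻ᵏ` for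
`a ∈ A`, and the series sums to `f a` (`taylor_along_disc`). Each term is a continuous polynomial,
so the same estimate holds on the polynomial hull of `A`. Hence the series converges uniformly and
boundedly on the hulls of the sets `U_n`.

Translates and dilates of continuous polynomials are continuous polynomials. This makes `Û_P` open,
with a ball around each point lying in a single hull (`UBounded.exists_ball_subset`), and balanced
(`balanced_UhatP`). On such a ball the series is dominated by a geometric series, and
`analyticAt_tsum` shows that its sum is analytic: iterated Cauchy estimates control the norms of
the multilinear Taylor coefficients of each term, so these can be added up to a power series with
positive radius. Uniqueness is the identity theorem on `Û_P`, which is star-shaped about the origin.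
-/

open Set Metric
open Set Metric

variable {E : Type*} [NormedAddCommGroup E] [NormedSpace ℂ E]

/-- A continuous `n`-homogeneous polynomial: `x ↦ M (x, …, x)` for a continuous `n`-linear map. -/
def IsHomogPoly (n : ℕ) (Q : E → ℂ) : Prop :=
  ∃ M : ContinuousMultilinearMap ℂ (fun _ : Fin n => E) ℂ, ∀ x, Q x = M fun _ => x

/-- A continuous polynomial: a finite sum of continuous homogeneous polynomials. -/
def IsContPoly (P : E → ℂ) : Prop :=
  ∃ (N : ℕ) (Q : ℕ → E → ℂ), (∀ k, IsHomogPoly k (Q k)) ∧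
    ∀ x, P x = ∑ k ∈ Finset.range (N + 1), Q k x

/-- `A` is `U`-bounded: contained in `U`, norm bounded, uniformly away from the boundary. -/
def UBounded (U A : Set E) : Prop :=
  A ⊆ U ∧ Bornology.IsBounded A ∧ ∃ d > 0, ∀ a ∈ A, ball a d ⊆ U

/-- `f` is in `H_b(U)`: analytic on `U` and bounded on every `U`-bounded set. -/
def MemHb (U : Set E) (f : E → ℂ) : Prop :=
  AnalyticOnNhd ℂ f U ∧ ∀ A : Set E, UBounded U A → ∃ C : ℝ, ∀ x ∈ A, ‖f x‖ ≤ C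

/-- Polynomial hull `Â_P` of a set `A`: points where each continuous polynomial is dominated by
its sup over `A` (formulated via upper bounds). -/
def polyHull (A : Set E) : Set E :=
  {x | ∀ P : E → ℂ, IsContPoly P → ∀ C : ℝ, (∀ a ∈ A, ‖P a‖ ≤ C) → ‖P x‖ ≤ C}

/-- The set `U_n = {x ∈ U : ‖x‖ ≤ n, ball x (1/n) ⊆ U}`. -/
def UNat (U : Set E) (n : ℕ) : Set E :=
  {x | x ∈ U ∧ ‖x‖ ≤ (n : ℝ) ∧ ball x (1 / (n : ℝ)) ⊆ U}

/-- `Û_P := ⋃ n, (U_n)̂_P`. -/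
def UhatP (U : Set E) : Set E := ⋃ n : ℕ, polyHull (UNat U n)

/-- A continuous character of `H_b(U)`. -/
def IsHbChar (U : Set E) (φ : (E → ℂ) → ℂ) : Prop :=
  φ (fun _ => 1) = 1 ∧
  (∀ f g, MemHb U f → MemHb U g → φ (f + g) = φ f + φ g) ∧
  (∀ (c : ℂ) (f), MemHb U f → φ (c • f) = c * φ f) ∧
  (∀ f g, MemHb U f → MemHb U g → φ (f * g) = φ f * φ g) ∧
  ∃ B : Set E, UBounded U B ∧
    ∀ f, MemHb U f → ∀ C : ℝ, (∀ x ∈ B, ‖f x‖ ≤ C) → ‖φ f‖ ≤ C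

/-- `U` is `H_b(U)`-convex. -/
def HbConvex (U : Set E) : Prop :=
  ∀ A : Set E, UBounded U A →
    UBounded U {x ∈ U | ∀ f, MemHb U f → ∀ C : ℝ, (∀ a ∈ A, ‖f a‖ ≤ C) → ‖f x‖ ≤ C}

/-- Continuous polynomials are dense in `H_b(U)`. -/
def PolysDense (U : Set E) : Prop :=
  ∀ f, MemHb U f → ∀ A : Set E, UBounded U A → ∀ ε > 0,
    ∃ P : E → ℂ, IsContPoly P ∧ ∀ x ∈ A, ‖f x - P x‖ ≤ ε



set_option linter.unusedSectionVars false

section Helpers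

variable {E : Type*} [NormedAddCommGroup E] [NormedSpace ℂ E]
  {F : Type*} [NormedAddCommGroup F] [NormedSpace ℂ F]

/-! ### Continuous polynomials -/

lemma IsHomogPoly.isContPoly {k : ℕ} {Q : E → ℂ} (h : IsHomogPoly k Q) : IsContPoly Q := by
  refine ⟨k, fun j => if j = k then Q else 0, fun j => ?_, fun x => ?_⟩
  · dsimp only
    split_ifs with hj
    · exact hj ▸ h
    · exact ⟨0, fun x => by simp⟩
  · rw [Finset.sum_eq_single k]
    · simp
    · intro b _ hb
      simp [hb]
    · simp

lemma IsContPoly.hasFinite {P : E → ℂ} (h : IsContPoly P) :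
    ∃ (p : FormalMultilinearSeries ℂ E ℂ) (n : ℕ), HasFiniteFPowerSeriesOnBall P p 0 n ⊤ := by
  obtain ⟨N, Q, hQ, hP⟩ := h
  choose M hM using hQ
  refine ⟨fun k => if k < N + 1 then M k else 0, N + 1,
    HasFiniteFPowerSeriesOnBall.mk' (fun m hm => if_neg (by lia)) (by simp) fun y _ => ?_⟩
  rw [zero_add, hP]
  refine Finset.sum_congr rfl fun i hi => ?_
  rw [if_pos (Finset.mem_range.1 hi), hM]

lemma isContPoly_of_hasFinite {P : E → ℂ} {p : FormalMultilinearSeries ℂ E ℂ} {v : E} {n : ℕ}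
    (h : HasFiniteFPowerSeriesOnBall P p v n ⊤) : IsContPoly fun x => P (v + x) := by
  refine ⟨n, fun k x => p k fun _ => x, fun k => ⟨p k, fun _ => rfl⟩, fun x => ?_⟩
  exact h.eq_partialSum x (by simp) (n + 1) (by lia)

/-- A continuous polynomial has a globally convergent finite power series at every point. -/
lemma IsContPoly.hasFinite_at {P : E → ℂ} (h : IsContPoly P) (v : E) :
    ∃ (p : FormalMultilinearSeries ℂ E ℂ) (n : ℕ), HasFiniteFPowerSeriesOnBall P p v n ⊤ := by
  obtain ⟨p, n, hp⟩ := h.hasFinite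
  have := hp.changeOrigin (y := v) (by simp)
  rw [zero_add, ENNReal.top_sub_coe] at this
  exact ⟨_, _, this⟩

lemma IsContPoly.translate {P : E → ℂ} (h : IsContPoly P) (v : E) :
    IsContPoly fun x => P (v + x) := by
  obtain ⟨p, n, hp⟩ := h.hasFinite_at v
  exact isContPoly_of_hasFinite hp

lemma IsContPoly.scale {P : E → ℂ} (h : IsContPoly P) (c : ℂ) :
    IsContPoly fun x => P (c • x) := by
  obtain ⟨N, Q, hQ, hP⟩ := h
  refine ⟨N, fun k x => Q k (c • x), fun k => ?_, fun x => hP _⟩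
  obtain ⟨M, hM⟩ := hQ k
  exact ⟨M.compContinuousLinearMap fun _ => c • ContinuousLinearMap.id ℂ E, fun x => by
    simp [hM]⟩

lemma IsContPoly.analyticOnNhd {P : E → ℂ} (h : IsContPoly P) : AnalyticOnNhd ℂ P univ := by
  intro x _
  obtain ⟨p, n, hp⟩ := h.hasFinite_at x
  exact hp.cpolynomialAt.analyticAt

/-! ### Sums of bounded polynomials -/

lemma norm_fderiv_le_of_ball {h : E → F} (hd : Differentiable ℂ h) {x : E} {r ε C : ℝ}
    (hε : 0 < ε) (hC : ∀ y ∈ ball x r, ‖h y‖ ≤ C) {y : E} (hy : y ∈ ball x (r - ε)) :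
    ‖fderiv ℂ h y‖ ≤ C / ε := by
  have hC0 : 0 ≤ C := (norm_nonneg _).trans (hC y (ball_subset_ball (by linarith) hy))
  refine ContinuousLinearMap.opNorm_le_bound _ (by positivity) fun v => ?_
  rcases eq_or_ne v 0 with rfl | hv
  · simp
  have hv' : 0 < ‖v‖ := norm_pos_iff.2 hv
  have hline : ∀ t : ℂ, HasDerivAt (fun t : ℂ => y + t • v) v t := fun t => by
    simpa using ((hasDerivAt_id t).smul_const v).const_add y
  have hder : HasDerivAt (fun t : ℂ => h (y + t • v)) (fderiv ℂ h y v) 0 := by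
    have h1 : HasFDerivAt h (fderiv ℂ h y) (y + (0 : ℂ) • v) := by
      simpa using (hd y).hasFDerivAt
    exact h1.comp_hasDerivAt (0 : ℂ) (hline 0)
  have key := Complex.norm_deriv_le_of_forall_mem_sphere_norm_le (c := 0) (R := ε / ‖v‖) (C := C)
    (f := fun t : ℂ => h (y + t • v)) (by positivity)
    (Differentiable.diffContOnCl (fun t =>
      (hd _).comp t (hline t).differentiableAt)) (fun z hz => by
        apply hC
        rw [mem_sphere_zero_iff_norm] at hz
        rw [mem_ball] at hy ⊢
        calc dist (y + z • v) x ≤ dist (y + z • v) y + dist y x := dist_triangle _ _ _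
          _ < ε + (r - ε) := by
            refine add_lt_add_of_le_of_lt ?_ hy
            rw [dist_eq_norm, add_sub_cancel_left, norm_smul, hz, div_mul_cancel₀ _ hv'.ne']
          _ = r := by ring)
  rw [hder.deriv] at key
  calc _ ≤ C / (ε / ‖v‖) := key
    _ = C / ε * ‖v‖ := by field_simp

lemma norm_iteratedFDeriv_le_of_ball [CompleteSpace F] {h : E → F}
    (ha : AnalyticOnNhd ℂ h univ) {x : E}
    {r ε C : ℝ} (hε : 0 < ε) (hC : ∀ y ∈ ball x r, ‖h y‖ ≤ C) (j : ℕ) :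
    ∀ y ∈ ball x (r - j * ε), ‖iteratedFDeriv ℂ j h y‖ ≤ C / ε ^ j := by
  induction j with
  | zero => simpa using hC
  | succ j ih =>
    intro y hy
    rw [← norm_fderiv_iteratedFDeriv, pow_succ, ← div_div]
    have hd : Differentiable ℂ (iteratedFDeriv ℂ j h) := fun z =>
      (ha.iteratedFDeriv j z (mem_univ z)).differentiableAt
    refine norm_fderiv_le_of_ball hd hε ih ?_
    convert hy using 2
    push_cast
    ring

/-- Cauchy estimate for the full (multilinear) Taylor coefficients of an entire function. Splitting
the radius into `j + 1` equal steps, one per derivative, costs only a geometric factor, since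
`(j + 1) ^ j ≤ j ! * e ^ (j + 1)`. -/
lemma norm_taylor_le [CompleteSpace F] {h : E → F} (ha : AnalyticOnNhd ℂ h univ) {x : E}
    {r C : ℝ} (hr : 0 < r) (hC : ∀ y ∈ ball x r, ‖h y‖ ≤ C) (j : ℕ) :
    ‖((j.factorial : ℂ)⁻¹) • iteratedFDeriv ℂ j h x‖ ≤
      C * Real.exp 1 * (Real.exp 1 / r) ^ j := by
  have hC0 : 0 ≤ C := (norm_nonneg _).trans (hC x (mem_ball_self hr))
  have h1 := norm_iteratedFDeriv_le_of_ball ha (ε := r / (j + 1)) (by positivity) hC j x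
    (mem_ball_self (by
      have : r - j * (r / (j + 1)) = r / (j + 1) := by field_simp; ring
      rw [this]; positivity))
  have h2 := Real.pow_div_factorial_le_exp (x := (j : ℝ) + 1) (by positivity) j
  rw [Real.exp_add, show Real.exp (j : ℝ) = Real.exp 1 ^ j by
    rw [← Real.exp_nat_mul, mul_one]] at h2
  rw [norm_smul, norm_inv, Complex.norm_natCast]
  calc (j.factorial : ℝ)⁻¹ * ‖iteratedFDeriv ℂ j h x‖
      ≤ (j.factorial : ℝ)⁻¹ * (C / (r / (j + 1)) ^ j) := by gcongr
    _ = C / r ^ j * (((j : ℝ) + 1) ^ j / j.factorial) := by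
      rw [div_pow]; field_simp
    _ ≤ C / r ^ j * (Real.exp 1 ^ j * Real.exp 1) := by gcongr
    _ = _ := by rw [div_pow]; ring

/-- A series of continuous polynomials that is dominated on a ball by a summable sequence of
constants is analytic at the centre: the full Taylor coefficients at `x` obey geometric bounds
that are summable over the series, so they can be added up coefficientwise. -/
lemma analyticAt_tsum {P : ℕ → E → ℂ} (hP : ∀ k, IsContPoly (P k)) {x : E} {r : ℝ} (hr : 0 < r)
    {C : ℕ → ℝ} (hCs : Summable C) (hC : ∀ k, ∀ y ∈ ball x r, ‖P k y‖ ≤ C k) :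
    AnalyticAt ℂ (fun y => ∑' k, P k y) x := by
  set a : ℝ := Real.exp 1 / r with ha
  have ha0 : 0 < a := by positivity
  set T : ℕ → (j : ℕ) → ContinuousMultilinearMap ℂ (fun _ : Fin j => E) ℂ :=
    fun k j => ((j.factorial : ℂ)⁻¹) • iteratedFDeriv ℂ j (P k) x with hT
  have hTb : ∀ k j, ‖T k j‖ ≤ C k * Real.exp 1 * a ^ j := fun k j =>
    norm_taylor_le (hP k).analyticOnNhd hr (hC k) j
  have hTsum : ∀ j, Summable fun k => T k j := fun j =>
    Summable.of_norm_bounded ((hCs.mul_right _).mul_right _) fun k => hTb k j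
  let p : FormalMultilinearSeries ℂ E ℂ := fun j => ∑' k, T k j
  have hp : ∀ j, ‖p j‖ ≤ (∑' k, C k) * Real.exp 1 * a ^ j := fun j =>
    tsum_of_norm_bounded ((hCs.hasSum.mul_right _).mul_right _) fun k => hTb k j
  have hs0 : 0 ≤ 1 / (2 * a) := by positivity
  set s : NNReal := ⟨1 / (2 * a), hs0⟩ with hs
  have has : a * (s : ℝ) = 1 / 2 := by
    change a * (1 / (2 * a)) = 1 / 2
    field_simp
  have hS0 : 0 ≤ ∑' k, C k :=
    tsum_nonneg fun k => (norm_nonneg _).trans (hC k x (mem_ball_self hr))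
  refine ⟨p, (s : ENNReal), ?_, ?_, ?_⟩
  · refine p.le_radius_of_bound ((∑' k, C k) * Real.exp 1) fun n => ?_
    calc ‖p n‖ * (s : ℝ) ^ n ≤ (∑' k, C k) * Real.exp 1 * a ^ n * (s : ℝ) ^ n := by
          gcongr; exact hp n
      _ = (∑' k, C k) * Real.exp 1 * (1 / 2) ^ n := by rw [mul_assoc _ (a ^ n), ← mul_pow, has]
      _ ≤ (∑' k, C k) * Real.exp 1 * 1 := by
          gcongr; exact pow_le_one₀ (by norm_num) (by norm_num)
      _ = _ := mul_one _
  · rw [ENNReal.coe_pos, ← NNReal.coe_pos]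
    change 0 < 1 / (2 * a)
    positivity
  · intro y hy
    have hy' : ‖y‖ ≤ (s : ℝ) := by
      rw [Metric.eball_coe, mem_ball_zero_iff] at hy
      exact hy.le
    have hFb : ∀ k j, ‖T k j fun _ => y‖ ≤ C k * (Real.exp 1 * (1 / 2) ^ j) := fun k j => by
      have hCk : 0 ≤ C k := (norm_nonneg _).trans (hC k x (mem_ball_self hr))
      calc ‖T k j fun _ => y‖ ≤ ‖T k j‖ * ‖y‖ ^ j := by
            simpa using (T k j).le_opNorm fun _ => y
        _ ≤ C k * Real.exp 1 * a ^ j * (s : ℝ) ^ j := by gcongr; exact hTb k j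
        _ = _ := by rw [mul_assoc _ (a ^ j), ← mul_pow, has]; ring
    have hFs : Summable fun q : ℕ × ℕ => T q.1 q.2 fun _ => y := by
      refine Summable.of_norm_bounded ?_ fun q => hFb q.1 q.2
      refine Summable.mul_of_nonneg hCs ((summable_geometric_of_lt_one (by norm_num)
        (by norm_num)).mul_left _) (fun k => (norm_nonneg _).trans (hC k x (mem_ball_self hr)))
        (fun j => by positivity)
    have hrow : ∀ k, HasSum (fun j => T k j fun _ => y) (P k (x + y)) := fun k => by
      obtain ⟨q, n, hq⟩ := (hP k).hasFinite_at x
      exact hq.toHasFPowerSeriesOnBall.hasSum_iteratedFDeriv (by simp)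
    have hcol : ∀ j, HasSum (fun k => T k j fun _ => y) (p j fun _ => y) := fun j =>
      (ContinuousMultilinearMap.hasSum_eval (hTsum j).hasSum _)
    have htot := hFs.hasSum
    have h1 := htot.prod_fiberwise hrow
    have h2 := ((Equiv.prodComm ℕ ℕ).hasSum_iff.2 htot).prod_fiberwise hcol
    have hsum : (∑' k, P k (x + y)) = ∑' q : ℕ × ℕ, T q.1 q.2 fun _ => y := h1.tsum_eq
    exact hsum ▸ h2

/-! ### Bounded sets of a balanced open set, and their polynomial hulls -/

lemma polyHull_mono {A B : Set E} (h : A ⊆ B) : polyHull A ⊆ polyHull B :=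
  fun _ hx P hP C hC => hx P hP C fun a ha => hC a (h ha)

lemma subset_polyHull (A : Set E) : A ⊆ polyHull A := fun _ hx _ _ _ hC => hC _ hx

lemma uBounded_UNat {U : Set E} (hU : IsOpen U) (n : ℕ) : UBounded U (UNat U n) := by
  refine ⟨fun x hx => hx.1, ?_, ?_⟩
  · exact isBounded_iff_forall_norm_le.2 ⟨n, fun x hx => hx.2.1⟩
  · rcases Nat.eq_zero_or_pos n with rfl | hn
    -- `1 / 0 = 0` makes the ball condition void, but then `‖x‖ ≤ 0` leaves only the origin
    · by_cases h0 : (0 : E) ∈ U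
      · obtain ⟨d, hd, hd'⟩ := Metric.isOpen_iff.1 hU 0 h0
        refine ⟨d, hd, fun a ha => ?_⟩
        have : a = 0 := by simpa using ha.2.1
        rwa [this]
      · refine ⟨1, one_pos, fun a ha => ?_⟩
        have : a = 0 := by simpa using ha.2.1
        exact absurd (this ▸ ha.1) h0
    · exact ⟨1 / n, by positivity, fun a ha => ha.2.2⟩

lemma UBounded.exists_UNat {U A : Set E} (h : UBounded U A) : ∃ m : ℕ, A ⊆ UNat U m := by
  obtain ⟨hAU, hb, d, hd, hball⟩ := h
  obtain ⟨R, hR⟩ := isBounded_iff_forall_norm_le.1 hb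
  obtain ⟨m, hm⟩ := exists_nat_gt (max R (1 / d))
  refine ⟨m, fun a ha => ⟨hAU ha, ?_, ?_⟩⟩
  · exact (hR a ha).trans ((le_max_left _ _).trans hm.le)
  · refine (ball_subset_ball ?_).trans (hball a ha)
    exact (one_div_le_one_div_of_le (by positivity) ((le_max_right _ _).trans hm.le)).trans
      (one_div_one_div d).le

/-- Some open thickening of a `U`-bounded set is `U`-bounded. It is written as a union of translates
of `A`, the form suited to translating polynomials. -/
lemma UBounded.exists_thicken {U A : Set E} (h : UBounded U A) :
    ∃ δ > 0, UBounded U {x | ∃ a ∈ A, ∃ v : E, ‖v‖ < δ ∧ x = v + a} := by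
  obtain ⟨hAU, hb, d, hd, hball⟩ := h
  obtain ⟨R, hR⟩ := isBounded_iff_forall_norm_le.1 hb
  refine ⟨d / 2, by positivity, ?_, ?_, d / 2, by positivity, ?_⟩
  · rintro _ ⟨a, ha, v, hv, rfl⟩
    exact hball a ha (by rw [mem_ball, dist_eq_norm, add_sub_cancel_right]; linarith)
  · refine isBounded_iff_forall_norm_le.2 ⟨d / 2 + R, ?_⟩
    rintro _ ⟨a, ha, v, hv, rfl⟩
    exact (norm_add_le _ _).trans (add_le_add hv.le (hR a ha))
  · rintro _ ⟨a, ha, v, hv, rfl⟩ y hy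
    refine hball a ha ?_
    rw [mem_ball] at hy ⊢
    calc dist y a ≤ dist y (v + a) + dist (v + a) a := dist_triangle _ _ _
      _ < d / 2 + d / 2 := by
        refine add_lt_add hy ?_
        rwa [dist_eq_norm, add_sub_cancel_right]
      _ = d := by ring

/-- In a balanced open set, balanced hulls of `U`-bounded sets are `U`-bounded. Scaling by `l`
shrinks the distance to the boundary by a factor `‖l‖`, which is harmful only for small `l`, when
the scaled set is already well inside a ball around the origin contained in `U`. -/
lemma UBounded.balancedHull {U A : Set E} (hU : IsOpen U) (h0 : (0 : E) ∈ U)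
    (hbal : Balanced ℂ U) (h : UBounded U A) :
    UBounded U {x | ∃ a ∈ A, ∃ l : ℂ, ‖l‖ ≤ 1 ∧ x = l • a} := by
  obtain ⟨hAU, hb, d, hd, hball⟩ := h
  obtain ⟨R, hR0, hR⟩ := hb.exists_pos_norm_le
  obtain ⟨e, he, hball0⟩ := Metric.isOpen_iff.1 hU 0 h0
  have hsm : ∀ (l : ℂ) (z : E), ‖l‖ ≤ 1 → z ∈ U → l • z ∈ U := fun l z hl hz =>
    hbal l hl (smul_mem_smul_set hz)
  refine ⟨?_, ?_, min (e / 2) (d * (e / (2 * R))), by positivity, ?_⟩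
  · rintro _ ⟨a, ha, l, hl, rfl⟩
    exact hsm l a hl (hAU ha)
  · refine isBounded_iff_forall_norm_le.2 ⟨R, ?_⟩
    rintro _ ⟨a, ha, l, hl, rfl⟩
    rw [norm_smul]
    calc ‖l‖ * ‖a‖ ≤ 1 * R := mul_le_mul hl (hR a ha) (norm_nonneg _) zero_le_one
      _ = R := one_mul R
  · rintro _ ⟨a, ha, l, hl, rfl⟩ y hy
    rw [mem_ball, dist_eq_norm, lt_min_iff] at hy
    by_cases hlt : ‖l‖ ≤ e / (2 * R)
    · refine hball0 ?_
      rw [mem_ball_zero_iff]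
      have h1 : ‖l • a‖ ≤ e / 2 := by
        rw [norm_smul]
        calc ‖l‖ * ‖a‖ ≤ e / (2 * R) * R :=
              mul_le_mul hlt (hR a ha) (norm_nonneg _) (by positivity)
          _ = e / 2 := by field_simp
      calc ‖y‖ = ‖(y - l • a) + l • a‖ := by rw [sub_add_cancel]
        _ ≤ ‖y - l • a‖ + ‖l • a‖ := norm_add_le _ _
        _ < e := by linarith [hy.1]
    · push Not at hlt
      have hl0 : 0 < ‖l‖ := lt_trans (by positivity) hlt
      have hl1 : l ≠ 0 := norm_pos_iff.1 hl0
      have hy' : y = l • (l⁻¹ • y) := by rw [smul_inv_smul₀ hl1]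
      rw [hy']
      refine hsm l _ hl (hball a ha ?_)
      rw [mem_ball, dist_eq_norm, show l⁻¹ • y - a = l⁻¹ • (y - l • a) by
        rw [smul_sub, inv_smul_smul₀ hl1], norm_smul, norm_inv, inv_mul_lt_iff₀ hl0]
      calc ‖y - l • a‖ < d * (e / (2 * R)) := hy.2
        _ ≤ d * ‖l‖ := by gcongr
        _ = ‖l‖ * d := mul_comm _ _

/-- A `U`-bounded set can be dilated by all scalars in a disc of radius slightly larger than `1`
and stays `U`-bounded. -/
lemma UBounded.exists_dilate {U A : Set E} (hU : IsOpen U) (h0 : (0 : E) ∈ U)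
    (hbal : Balanced ℂ U) (h : UBounded U A) :
    ∃ ρ : ℝ, 1 < ρ ∧ UBounded U {x | ∃ a ∈ A, ∃ l : ℂ, ‖l‖ ≤ ρ ∧ x = l • a} := by
  have hA' := h.balancedHull hU h0 hbal
  obtain ⟨δ, hδ, hB⟩ := hA'.exists_thicken
  obtain ⟨R, hR0, hR⟩ := h.2.1.exists_pos_norm_le
  set ρ : ℝ := 1 + δ / (2 * R) with hρ
  have hρ1 : 1 < ρ := by
    have : 0 < δ / (2 * R) := by positivity
    linarith
  have hρ0 : (0 : ℝ) < ρ := by linarith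
  have hρc : (ρ : ℂ) ≠ 0 := by exact_mod_cast hρ0.ne'
  have hsub : {x | ∃ a ∈ A, ∃ l : ℂ, ‖l‖ ≤ ρ ∧ x = l • a} ⊆
      {x | ∃ a ∈ {x | ∃ a ∈ A, ∃ l : ℂ, ‖l‖ ≤ 1 ∧ x = l • a}, ∃ v : E, ‖v‖ < δ ∧ x = v + a} := by
    rintro _ ⟨a, ha, l, hl, rfl⟩
    have hm : ‖l / (ρ : ℂ)‖ ≤ 1 := by
      rw [norm_div, Complex.norm_real, Real.norm_of_nonneg hρ0.le]
      exact (div_le_one hρ0).2 hl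
    refine ⟨(l / (ρ : ℂ)) • a, ⟨a, ha, l / (ρ : ℂ), hm, rfl⟩, l • a - (l / (ρ : ℂ)) • a, ?_, by simp⟩
    have : l • a - (l / (ρ : ℂ)) • a = ((l / (ρ : ℂ)) * ((ρ - 1 : ℝ) : ℂ)) • a := by
      rw [← sub_smul]
      congr 1
      push_cast
      field_simp
    rw [this, norm_smul, norm_mul, Complex.norm_real, Real.norm_of_nonneg (by linarith)]
    calc ‖l / (ρ : ℂ)‖ * (ρ - 1) * ‖a‖ ≤ 1 * (ρ - 1) * R := by
          have hpos : 0 ≤ ρ - 1 := by linarith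
          exact mul_le_mul (mul_le_mul_of_nonneg_right hm hpos) (hR a ha) (norm_nonneg _)
            (by linarith)
      _ = δ / 2 := by rw [hρ]; field_simp; ring
      _ < δ := by linarith
  refine ⟨ρ, hρ1, hsub.trans hB.1, hB.2.1.subset hsub, ?_⟩
  obtain ⟨d, hd, hd'⟩ := hB.2.2
  exact ⟨d, hd, fun a ha => hd' a (hsub ha)⟩

/-- Every point of the hull of a `U`-bounded set is the centre of a ball of uniform radius inside
the hull of another one, because a translate of a polynomial is a polynomial. -/
lemma UBounded.exists_ball_subset {U A : Set E} (h : UBounded U A) :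
    ∃ δ > 0, ∃ m : ℕ, ∀ x ∈ polyHull A, ball x δ ⊆ polyHull (UNat U m) := by
  obtain ⟨δ, hδ, hB⟩ := h.exists_thicken
  obtain ⟨m, hm⟩ := hB.exists_UNat
  refine ⟨δ, hδ, m, fun x hx y hy => polyHull_mono hm fun P hP C hC => ?_⟩
  have := hx _ (hP.translate (y - x)) C fun a ha =>
    hC _ ⟨a, ha, y - x, by rwa [← dist_eq_norm], rfl⟩
  simpa using this

lemma isOpen_UhatP {U : Set E} (hU : IsOpen U) : IsOpen (UhatP U) := by
  refine Metric.isOpen_iff.2 fun x hx => ?_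
  obtain ⟨n, hn⟩ := mem_iUnion.1 hx
  obtain ⟨δ, hδ, m, hm⟩ := (uBounded_UNat hU n).exists_ball_subset
  exact ⟨δ, hδ, (hm x hn).trans (subset_iUnion (fun n => polyHull (UNat U n)) m)⟩

lemma balanced_UhatP {U : Set E} (hU : IsOpen U) (h0 : (0 : E) ∈ U) (hbal : Balanced ℂ U) :
    Balanced ℂ (UhatP U) := by
  rintro l hl _ ⟨x, hx, rfl⟩
  obtain ⟨n, hn⟩ := mem_iUnion.1 hx
  obtain ⟨m, hm⟩ := ((uBounded_UNat hU n).balancedHull hU h0 hbal).exists_UNat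
  refine mem_iUnion.2 ⟨m, polyHull_mono hm fun P hP C hC => ?_⟩
  exact hn _ (hP.scale l) C fun a ha => hC _ ⟨a, ha, l, hl, rfl⟩

lemma uBounded_singleton {U : Set E} (hU : IsOpen U) {x : E} (hx : x ∈ U) :
    UBounded U {x} := by
  obtain ⟨d, hd, hd'⟩ := Metric.isOpen_iff.1 hU x hx
  exact ⟨by simpa using hx, Bornology.isBounded_singleton, d, hd, by simpa using hd'⟩

lemma subset_UhatP {U : Set E} (hU : IsOpen U) : U ⊆ UhatP U := fun x hx => by
  obtain ⟨m, hm⟩ := (uBounded_singleton hU hx).exists_UNat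
  exact mem_iUnion.2 ⟨m, subset_polyHull _ (hm rfl)⟩

/-! ### The Taylor series at the origin -/

/-- If `f` is analytic along the closed disc of radius `ρ > 1` in the direction `a`, its Taylor
series at the origin converges to `f a` with geometrically decaying terms: both facts are
one-variable statements about `t ↦ f (t • a)`. -/
lemma taylor_along_disc {f : E → ℂ} {p : FormalMultilinearSeries ℂ E ℂ}
    (hp : HasFPowerSeriesAt f p 0) {a : E} {ρ C : ℝ} (hρ : 1 < ρ)
    (ha : ∀ l : ℂ, ‖l‖ ≤ ρ → AnalyticAt ℂ f (l • a))
    (hC : ∀ l : ℂ, ‖l‖ ≤ ρ → ‖f (l • a)‖ ≤ C) :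
    (∀ k, ‖p k fun _ => a‖ ≤ C * ρ⁻¹ ^ k) ∧ HasSum (fun k => p k fun _ => a) (f a) := by
  have hρ0 : 0 < ρ := by linarith
  set L : ℂ →L[ℂ] E := ContinuousLinearMap.toSpanSingleton ℂ a with hL
  have hLapp : ∀ t : ℂ, L t = t • a := fun t => rfl
  have hpL : HasFPowerSeriesAt f p (L 0) := by simpa using hp
  obtain ⟨r, hr⟩ := hpL.compContinuousLinearMap
  have hcoef : ∀ k, (k.factorial : ℂ) * (p k fun _ => a) = iteratedDeriv k (f ∘ L) 0 := fun k => by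
    have := hr.factorial_smul 1 k
    rw [iteratedDeriv_eq_iteratedFDeriv, ← this]
    simp only [FormalMultilinearSeries.compContinuousLinearMap_apply, nsmul_eq_mul]
    congr 2
    ext i
    simp [hLapp]
  have hdiff : ∀ l : ℂ, ‖l‖ ≤ ρ → DifferentiableAt ℂ (f ∘ L) l := fun l hl =>
    (ha l hl).differentiableAt.comp l L.differentiableAt
  have hfac : ∀ k : ℕ, (k.factorial : ℂ) ≠ 0 := fun k => by exact_mod_cast k.factorial_ne_zero
  have hd : DifferentiableOn ℂ (f ∘ L) (closedBall 0 ρ) := fun l hl =>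
    (hdiff l (by simpa using hl)).differentiableWithinAt
  refine ⟨fun k => ?_, ?_⟩
  · have h1 := Complex.norm_iteratedDeriv_le_of_forall_mem_sphere_norm_le (c := 0) (C := C) k hρ0
      (f := f ∘ L) (hd.diffContOnCl_ball subset_rfl) (fun z hz => hC z (by
        simpa using (mem_sphere_zero_iff_norm.1 hz).le))
    rw [← hcoef, norm_mul, Complex.norm_natCast, mul_div_assoc] at h1
    rw [inv_pow, ← div_eq_mul_inv]
    exact le_of_mul_le_mul_left h1 (by positivity)
  · have h2 := Complex.hasSum_taylorSeries_on_ball (f := f ∘ L) (c := 0) (r := ρ) (z := 1)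
      (hd.mono ball_subset_closedBall) (by simpa using hρ)
    have h3 : (f ∘ L) 1 = f a := by simp [hLapp]
    rw [h3] at h2
    refine h2.congr_fun fun k => ?_
    rw [← hcoef k]
    simp only [sub_zero, one_pow, smul_eq_mul, one_mul]
    rw [inv_mul_cancel_left₀ (hfac k)]

end Helpers
/-- For a nonempty balanced open `U`, the set `Û_P` is balanced, open and contains
`U`, and every `f ∈ H_b(U)` has a unique holomorphic extension to `Û_P`, which moreover is
bounded on each hull `(U_n)̂_P`. -/
theorem stmt_5 {E : Type*} [NormedAddCommGroup E] [NormedSpace ℂ E] [CompleteSpace E]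
    (U : Set E) (hU : IsOpen U) (hne : U.Nonempty) (hbal : Balanced ℂ U) :
    Balanced ℂ (UhatP U) ∧ IsOpen (UhatP U) ∧ U ⊆ UhatP U ∧
    ∀ f : E → ℂ, MemHb U f →
      ∃ g : E → ℂ,
        (AnalyticOnNhd ℂ g (UhatP U) ∧ Set.EqOn g f U ∧
          ∀ n : ℕ, ∃ C : ℝ, ∀ x ∈ polyHull (UNat U n), ‖g x‖ ≤ C) ∧
        ∀ g' : E → ℂ, AnalyticOnNhd ℂ g' (UhatP U) → Set.EqOn g' f U →
          Set.EqOn g' g (UhatP U) := by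
  have h0 : (0 : E) ∈ U := hbal.zero_mem hne
  have hbalH := balanced_UhatP hU h0 hbal
  have hsub := subset_UhatP hU
  refine ⟨hbalH, isOpen_UhatP hU, hsub, fun f hf => ?_⟩
  obtain ⟨p, hp⟩ := hf.1 0 h0
  have hhom : ∀ k, IsContPoly fun x => p k fun _ => x := fun k =>
    IsHomogPoly.isContPoly (k := k) ⟨p k, fun _ => rfl⟩
  have key : ∀ A : Set E, UBounded U A → ∃ (C θ : ℝ), 0 ≤ θ ∧ θ < 1 ∧
      (∀ k, ∀ x ∈ polyHull A, ‖p k fun _ => x‖ ≤ C * θ ^ k) ∧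
      ∀ a ∈ A, HasSum (fun k => p k fun _ => a) (f a) := by
    intro A hA
    obtain ⟨ρ, hρ, hB⟩ := hA.exists_dilate hU h0 hbal
    obtain ⟨C, hC⟩ := hf.2 _ hB
    have hdisc := fun a (ha : a ∈ A) => taylor_along_disc hp (a := a) (C := C) hρ
      (fun l hl => hf.1 _ (hB.1 ⟨a, ha, l, hl, rfl⟩)) (fun l hl => hC _ ⟨a, ha, l, hl, rfl⟩)
    refine ⟨C, ρ⁻¹, by positivity, inv_lt_one_of_one_lt₀ hρ, fun k x hx => ?_,
      fun a ha => (hdisc a ha).2⟩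
    exact hx _ (hhom k) _ fun a ha => (hdisc a ha).1 k
  set g : E → ℂ := fun x => ∑' k, p k fun _ => x with hg
  have hgan : AnalyticOnNhd ℂ g (UhatP U) := by
    intro x hx
    obtain ⟨n, hn⟩ := mem_iUnion.1 hx
    obtain ⟨δ, hδ, m, hm⟩ := (uBounded_UNat hU n).exists_ball_subset
    obtain ⟨C, θ, hθ0, hθ1, hb, -⟩ := key _ (uBounded_UNat hU m)
    exact analyticAt_tsum hhom hδ ((summable_geometric_of_lt_one hθ0 hθ1).mul_left C)
      fun k y hy => hb k y (hm x hn hy)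
  have hgf : Set.EqOn g f U := fun x hx => by
    obtain ⟨_, _, -, -, -, hsum⟩ := key _ (uBounded_singleton hU hx)
    exact (hsum x rfl).tsum_eq
  refine ⟨g, ⟨hgan, hgf, fun n => ?_⟩, fun g' hg' hg'f => ?_⟩
  · obtain ⟨C, θ, hθ0, hθ1, hb, -⟩ := key _ (uBounded_UNat hU n)
    exact ⟨C * (1 - θ)⁻¹, fun x hx =>
      tsum_of_norm_bounded ((hasSum_geometric_of_lt_one hθ0 hθ1).mul_left C) fun k => hb k x hx⟩
  · have hstar : StarConvex ℝ 0 (UhatP U) := starConvex_zero_iff.2 fun x hx t ht0 ht1 => by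
      have := hbalH (t : ℂ) (by rwa [Complex.norm_real, Real.norm_of_nonneg ht0])
        (smul_mem_smul_set hx)
      simpa using this
    refine hg'.eqOn_of_preconnected_of_eventuallyEq hgan
      (hstar.isPathConnected (hsub h0)).isConnected.isPreconnected (hsub h0) ?_
    filter_upwards [hU.mem_nhds h0] with x hx
    rw [hg'f hx, hgf hx]
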